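/- arXiv:2301.07437 — 2 statements merged into one kernel-verified Lean document; each statement's English description precedes it below -/
import Mathlib

section
/- Let G be a group, K a normal subgroup of G, and ρ̃ : K → CircleDeg1Liftˣ a group homomorphism. Suppose g ∈ G is lift-compatible for ρ̃, i.e. there exists L ∈ CircleDeg1Liftˣ such that for every x ∈ K there is an integer n with ρ̃(g⁻¹xg) = L⁻¹ · ρ̃(x) · L · translate(n)⁻¹. Then for every x ∈ K, the real number τ(ρ̃(x)) − τ(ρ̃(g⁻¹xg)) is an integer. (First half of Lemma 3.1: the map k'_{ρ̃}(g) is integer-valued.) -/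
/-- The translation `x ↦ x + a` as an element of `CircleDeg1Liftˣ`. -/
noncomputable def translateU (a : ℝ) : CircleDeg1Liftˣ :=
  CircleDeg1Lift.translate (Multiplicative.ofAdd a)

/-- The Poincaré translation number of an invertible degree-one lift. -/
noncomputable def tn (u : CircleDeg1Liftˣ) : ℝ :=
  CircleDeg1Lift.translationNumber (u : CircleDeg1Lift)

theorem tn_translateU (a : ℝ) : tn (translateU a) = a :=
  CircleDeg1Lift.translationNumber_translate a

theorem tn_inv (u : CircleDeg1Liftˣ) : tn u⁻¹ = -tn u :=
  CircleDeg1Lift.translationNumber_units_inv u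

theorem tn_inv_mul_mul (u v : CircleDeg1Liftˣ) : tn (u⁻¹ * v * u) = tn v :=
  CircleDeg1Lift.translationNumber_conj_eq' u v

theorem tn_mul_of_commute {u v : CircleDeg1Liftˣ} (h : Commute u v) : tn (u * v) = tn u + tn v :=
  CircleDeg1Lift.translationNumber_mul_of_commute h.units_val

theorem commute_translateU_intCast (u : CircleDeg1Liftˣ) (n : ℤ) : Commute u (translateU n) :=
  Units.ext <| CircleDeg1Lift.ext <| (u : CircleDeg1Lift).map_int_add n

theorem stmt_1_general (u L : CircleDeg1Liftˣ) (n : ℤ) :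
    tn u - tn (L⁻¹ * u * L * (translateU n)⁻¹) = n := by
  have h_comm := (commute_translateU_intCast (L⁻¹ * u * L) n).inv_right
  rw [tn_mul_of_commute h_comm, tn_inv_mul_mul, tn_inv, tn_translateU]
  ring

theorem stmt_1 {G : Type*} [Group G] (K : Subgroup G) (hK : K.Normal)
    (ρ : K →* CircleDeg1Liftˣ) (g : G)
    (hg : ∃ L : CircleDeg1Liftˣ, ∀ x : K, ∃ n : ℤ,
      ρ ⟨g⁻¹ * x * g, hK.conj_mem' x x.2 g⟩ = L⁻¹ * ρ x * L * (translateU n)⁻¹) :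
    ∀ x : K, ∃ n : ℤ,
      tn (ρ x) - tn (ρ ⟨g⁻¹ * x * g, hK.conj_mem' x x.2 g⟩) = n := by
  obtain ⟨L, hL⟩ := hg
  intro x
  obtain ⟨n, hn⟩ := hL x
  exact ⟨n, hn ▸ stmt_1_general (ρ x) L n⟩
end

section
/- Let G be a group, K a normal subgroup of G, and ρ̃ : K → CircleDeg1Liftˣ a group homomorphism such that every g ∈ G is lift-compatible for ρ̃, i.e. for every g ∈ G there exists L ∈ CircleDeg1Liftˣ such that for every x ∈ K there is an integer n with ρ̃(g⁻¹xg) = L⁻¹ · ρ̃(x) · L · translate(n)⁻¹. Then there exists a function κ : G → K → ℤ satisfying: (i) (κ(g)(x) : ℝ) = τ(ρ̃(x)) − τ(ρ̃(g⁻¹xg)) for all g ∈ G, x ∈ K; (ii) κ(g)(xy) = κ(g)(x) + κ(g)(y) for all g ∈ G and x, y ∈ K; (iii) κ(g₁g₂)(x) = κ(g₁)(x) + κ(g₂)(g₁⁻¹xg₁) for all g₁, g₂ ∈ G and x ∈ K; (iv) κ(gx) = κ(g) for all g ∈ G and x ∈ K, so κ descends to a crossed homomorphism G/K → Hom(K,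 ℤ). (The general construction of the crossed homomorphism k_{ρ̃}, Section 5.) -/
theorem translateU_add (a b : ℝ) : translateU (a + b) = translateU a * translateU b :=
  map_mul CircleDeg1Lift.translate (Multiplicative.ofAdd a) (Multiplicative.ofAdd b)

theorem tn_conj_mul_translateU_inv (L u : CircleDeg1Liftˣ) (n : ℤ) :
    tn (L⁻¹ * u * L * (translateU n)⁻¹) = tn u - n := by
  rw [tn_mul_of_commute (commute_translateU_intCast _ n).inv_right, tn_inv_mul_mul, tn_inv,
    tn_translateU, sub_eq_add_neg]

theorem conj_mul_translateU_inv_mul (L u v : CircleDeg1Liftˣ) (m n : ℤ) :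
    L⁻¹ * u * L * (translateU m)⁻¹ * (L⁻¹ * v * L * (translateU n)⁻¹) =
      L⁻¹ * (u * v) * L * (translateU (m + n : ℤ))⁻¹ := by
  have central : Commute (translateU m)⁻¹ (L⁻¹ * v * L * (translateU n)⁻¹) :=
    (commute_translateU_intCast _ m).inv_right.symm
  rw [mul_assoc, central.eq, Int.cast_add, translateU_add]
  group

section ConjugationDefect

variable {G : Type*} [Group G] {K : Subgroup G} [K.Normal]

/-- The element `g` is lift-compatible for `ρ`: precomposing `ρ` with `x ↦ g⁻¹ * x * g` conjugates
it by some lift `L`, up to integer translations depending on `x`. -/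
def IsLiftCompatible (ρ : K →* CircleDeg1Liftˣ) (g : G) : Prop :=
  ∃ L : CircleDeg1Liftˣ, ∀ x : K, ∃ n : ℤ,
    ρ ((MulAut.conjNormal g)⁻¹ x) = L⁻¹ * ρ x * L * (translateU n)⁻¹

/-- The change `τ(ρ x) - τ(ρ (g⁻¹ * x * g))` of the translation number under conjugation by `g`,
as a real number; for lift-compatible `g` it is the integer `κ g x` of the crossed homomorphism. -/
noncomputable def conjDefect (ρ : K →* CircleDeg1Liftˣ) (g : G) (x : K) : ℝ :=
  tn (ρ x) - tn (ρ ((MulAut.conjNormal g)⁻¹ x))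

theorem conjDefect_eq_of_map_conj_eq {ρ : K →* CircleDeg1Liftˣ} {g : G} {L : CircleDeg1Liftˣ}
    {x : K} {n : ℤ}
    (h : ρ ((MulAut.conjNormal g)⁻¹ x) = L⁻¹ * ρ x * L * (translateU n)⁻¹) :
    conjDefect ρ g x = n := by
  rw [conjDefect, h, tn_conj_mul_translateU_inv, sub_sub_cancel]

theorem IsLiftCompatible.exists_intCast_eq_conjDefect {ρ : K →* CircleDeg1Liftˣ} {g : G}
    (hg : IsLiftCompatible ρ g) (x : K) : ∃ n : ℤ, (n : ℝ) = conjDefect ρ g x := by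
  obtain ⟨L, hL⟩ := hg
  obtain ⟨n, hn⟩ := hL x
  exact ⟨n, (conjDefect_eq_of_map_conj_eq hn).symm⟩

theorem IsLiftCompatible.conjDefect_mul_right {ρ : K →* CircleDeg1Liftˣ} {g : G}
    (hg : IsLiftCompatible ρ g) (x y : K) :
    conjDefect ρ g (x * y) = conjDefect ρ g x + conjDefect ρ g y := by
  obtain ⟨L, hL⟩ := hg
  obtain ⟨m, hm⟩ := hL x
  obtain ⟨n, hn⟩ := hL y
  have hmn : ρ ((MulAut.conjNormal g)⁻¹ (x * y)) =
      L⁻¹ * ρ (x * y) * L * (translateU (m + n : ℤ))⁻¹ := by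
    rw [map_mul, map_mul, map_mul, hm, hn, conj_mul_translateU_inv_mul]
  rw [conjDefect_eq_of_map_conj_eq hm, conjDefect_eq_of_map_conj_eq hn,
    conjDefect_eq_of_map_conj_eq hmn, Int.cast_add]

theorem conjDefect_mul_left (ρ : K →* CircleDeg1Liftˣ) (g₁ g₂ : G) (x : K) :
    conjDefect ρ (g₁ * g₂) x =
      conjDefect ρ g₁ x + conjDefect ρ g₂ ((MulAut.conjNormal g₁)⁻¹ x) := by
  simp only [conjDefect, map_mul, mul_inv_rev, MulAut.mul_apply, sub_add_sub_cancel]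

theorem conjDefect_coe (ρ : K →* CircleDeg1Liftˣ) (x y : K) : conjDefect ρ (x : G) y = 0 := by
  have conj_eq : (MulAut.conjNormal (x : G))⁻¹ y = x⁻¹ * y * x :=
    Subtype.ext (MulAut.conjNormal_inv_apply (x : G) y)
  rw [conjDefect, conj_eq, map_mul, map_mul, map_inv, tn_inv_mul_mul, sub_self]

theorem conjDefect_mul_coe (ρ : K →* CircleDeg1Liftˣ) (g : G) (x y : K) :
    conjDefect ρ (g * x) y = conjDefect ρ g y := by
  rw [conjDefect_mul_left, conjDefect_coe, add_zero]

end ConjugationDefect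

theorem stmt_15 {G : Type*} [Group G] (K : Subgroup G) (hK : K.Normal)
    (ρ : K →* CircleDeg1Liftˣ)
    (hlift : ∀ g : G, ∃ L : CircleDeg1Liftˣ, ∀ x : K, ∃ n : ℤ,
      ρ ⟨g⁻¹ * x * g, hK.conj_mem' x x.2 g⟩ = L⁻¹ * ρ x * L * (translateU n)⁻¹) :
    ∃ κ : G → K → ℤ,
      (∀ (g : G) (x : K),
        (κ g x : ℝ) = tn (ρ x) - tn (ρ ⟨g⁻¹ * x * g, hK.conj_mem' x x.2 g⟩)) ∧
      (∀ (g : G) (x y : K), κ g (x * y) = κ g x + κ g y) ∧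
      (∀ (g₁ g₂ : G) (x : K),
        κ (g₁ * g₂) x = κ g₁ x + κ g₂ ⟨g₁⁻¹ * x * g₁, hK.conj_mem' x x.2 g₁⟩) ∧
      (∀ (g : G) (x : K), κ (g * x) = κ g) := by
  have conj_eq (g : G) (x : K) :
      (⟨g⁻¹ * x * g, hK.conj_mem' x x.2 g⟩ : K) = (MulAut.conjNormal g)⁻¹ x :=
    Subtype.ext (MulAut.conjNormal_inv_apply g x).symm
  simp only [conj_eq] at hlift ⊢
  have compatible (g : G) : IsLiftCompatible ρ g := hlift g
  choose κ hκ using fun g => (compatible g).exists_intCast_eq_conjDefect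
  refine ⟨κ, hκ, fun g x y => ?_, fun g₁ g₂ x => ?_, fun g x => funext fun y => ?_⟩ <;>
    apply Int.cast_injective (α := ℝ)
  · simp only [Int.cast_add, hκ, (compatible g).conjDefect_mul_right]
  · simp only [Int.cast_add, hκ, conjDefect_mul_left]
  · simp only [hκ, conjDefect_mul_coe]
end
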